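/- Let s ≥ 1 and let Q be a random variable with the chi-squared distribution with s degrees of freedom. Then for every a ≥ 0, the truncated first moment satisfies E[Q · 1{Q ≤ a}] = s · F_{χ²_{s+2}}(a), where F_{χ²_{s+2}} is the cumulative distribution function of the chi-squared distribution with s + 2 degrees of freedom. -/

import Mathlib

/-!
Multiplying the Gamma density of shape `p` and rate `r` by `x` raises the exponent of `x` by one,
and `Γ(p + 1) = p Γ(p)` turns the result into `p / r` times the Gamma density of shape `p + 1` and
the same rate. For the chi-squared distribution, `p = s / 2` and `r = 1 / 2`, so the factor is `s`
and the new shape is `(s + 2) / 2`.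
-/

open MeasureTheory ProbabilityTheory

/-- The chi-squared distribution with `k` degrees of freedom: the Gamma distribution with
shape `k/2` and rate `1/2`. -/
noncomputable def chiSqMeasure (k : ℕ) : Measure ℝ :=
  gammaMeasure (k / 2 : ℝ) (1 / 2 : ℝ)

/-- The CDF of the chi-squared distribution with `k` degrees of freedom at `a`: the measure it
assigns to `[0, a]`. -/
noncomputable def chiSqCDF (k : ℕ) (a : ℝ) : ℝ :=
  (chiSqMeasure k (Set.Icc 0 a)).toReal

section GammaMeasure

variable {p r : ℝ}

lemma mul_gammaPDFReal (hp : 0 < p) (hr : 0 < r) (x : ℝ) :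
    x * gammaPDFReal p r x = p / r * gammaPDFReal (p + 1) r x := by
  rcases lt_or_ge x 0 with hx | hx
  · simp [gammaPDFReal, hx.not_ge]
  have hΓ : Real.Gamma p ≠ 0 := (Real.Gamma_pos_of_pos hp).ne'
  have hx_rpow : x ^ p = x ^ (p - 1) * x := by
    simpa using Real.rpow_add_one' hx (y := p - 1) (by simpa using hp.ne')
  simp only [gammaPDFReal, if_pos hx]
  rw [Real.Gamma_add_one hp.ne', Real.rpow_add_one hr.ne', add_sub_cancel_right, hx_rpow]
  field_simp

variable {E : Type*} [NormedAddCommGroup E] [NormedSpace ℝ E]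

lemma setIntegral_gammaMeasure_eq_setIntegral_smul (hp : 0 < p) (hr : 0 < r) (S : Set ℝ)
    (f : ℝ → E) :
    ∫ x in S, f x ∂gammaMeasure p r = ∫ x in S, gammaPDFReal p r x • f x := by
  have h_meas : Measurable (gammaPDF p r) := (measurable_gammaPDFReal p r).ennreal_ofReal
  rw [gammaMeasure, setIntegral_withDensity_eq_setIntegral_toReal_smul' S h_meas
    (ae_of_all _ fun _ ↦ ENNReal.ofReal_lt_top)]
  simp only [gammaPDF, ENNReal.toReal_ofReal (gammaPDFReal_nonneg hp hr _)]

lemma setIntegral_id_smul_gammaMeasure (hp : 0 < p) (hr : 0 < r) (S : Set ℝ) (f : ℝ → E) :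
    ∫ x in S, x • f x ∂gammaMeasure p r = (p / r) • ∫ x in S, f x ∂gammaMeasure (p + 1) r := by
  calc
    ∫ x in S, x • f x ∂gammaMeasure p r
      = ∫ x in S, gammaPDFReal p r x • x • f x :=
        setIntegral_gammaMeasure_eq_setIntegral_smul hp hr S _
    _ = ∫ x in S, (p / r) • gammaPDFReal (p + 1) r x • f x := by
        simp only [smul_smul, mul_comm (gammaPDFReal p r _), mul_gammaPDFReal hp hr]
    _ = (p / r) • ∫ x in S, gammaPDFReal (p + 1) r x • f x := integral_smul _ _
    _ = (p / r) • ∫ x in S, f x ∂gammaMeasure (p + 1) r := by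
        rw [setIntegral_gammaMeasure_eq_setIntegral_smul (by positivity) hr]

lemma setIntegral_id_gammaMeasure (hp : 0 < p) (hr : 0 < r) (S : Set ℝ) :
    ∫ x in S, x ∂gammaMeasure p r = p / r * (gammaMeasure (p + 1) r).real S := by
  simpa using setIntegral_id_smul_gammaMeasure hp hr S (fun _ ↦ (1 : ℝ))

lemma ae_nonneg_gammaMeasure (p r : ℝ) : ∀ᵐ x ∂gammaMeasure p r, 0 ≤ x := by
  have h_Iio : gammaMeasure p r (Set.Iio 0) = 0 := by
    rw [gammaMeasure, withDensity_apply _ measurableSet_Iio, lintegral_gammaPDF_of_nonpos le_rfl]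
  simpa using measure_eq_zero_iff_ae_notMem.mp h_Iio

end GammaMeasure

lemma setIntegral_id_chiSqMeasure {s : ℕ} (hs : 0 < s) (S : Set ℝ) :
    ∫ x in S, x ∂chiSqMeasure s = s * (chiSqMeasure (s + 2)).real S := by
  have h_shape : ((s + 2 : ℕ) : ℝ) / 2 = s / 2 + 1 := by push_cast; ring
  have h_mean : (s / 2 : ℝ) / (1 / 2) = s := by ring
  rw [chiSqMeasure, chiSqMeasure, setIntegral_id_gammaMeasure (by positivity) (by positivity),
    h_shape, h_mean]

lemma chiSqCDF_eq_measureReal_Iic (k : ℕ) (a : ℝ) :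
    chiSqCDF k a = (chiSqMeasure k).real (Set.Iic a) := by
  refine measureReal_congr ?_
  filter_upwards [ae_nonneg_gammaMeasure (k / 2) (1 / 2)] with x hx
  exact propext (and_iff_right hx)

/-- If `Q` is a random variable with the chi-squared distribution with `s ≥ 1`
degrees of freedom, then for every `a ≥ 0`,
`E[Q · 1{Q ≤ a}] = s · F_{χ²_{s+2}}(a)`. -/
theorem chiSq_truncated_first_moment {Ω : Type*} [MeasurableSpace Ω] (P : Measure Ω)
    [IsProbabilityMeasure P] (s : ℕ) (hs : 1 ≤ s) (Q : Ω → ℝ) (hQ : Measurable Q)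
    (hdist : Measure.map Q P = chiSqMeasure s) (a : ℝ) (ha : 0 ≤ a) :
    ∫ ω in {ω | Q ω ≤ a}, Q ω ∂P = s * chiSqCDF (s + 2) a := by
  calc
    ∫ ω in {ω | Q ω ≤ a}, Q ω ∂P = ∫ x in Set.Iic a, x ∂(Measure.map Q P) :=
      (setIntegral_map measurableSet_Iic aestronglyMeasurable_id hQ.aemeasurable).symm
    _ = ∫ x in Set.Iic a, x ∂chiSqMeasure s := by rw [hdist]
    _ = s * (chiSqMeasure (s + 2)).real (Set.Iic a) := setIntegral_id_chiSqMeasure hs _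
    _ = s * chiSqCDF (s + 2) a := by rw [chiSqCDF_eq_measureReal_Iic]
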